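/- Suppose Φ : 𝔻ⁿ → 𝔻ⁿ is holomorphic and C¹-smooth on the closed polydisc, and satisfies the rank condition (†): for every nonempty subset I ⊆ {1,…,n} of cardinality q and every ζ ∈ 𝕋ⁿ with Φ_I(ζ) ∈ 𝕋^q, the complex derivative d_ζΦ_I has rank q. Then the same holds on the full topological boundary: for every nonempty I ⊆ {1,…,n} of cardinality q and every ξ in the closure of 𝔻ⁿ with Φ_I(ξ) ∈ 𝕋^q, the derivative d_ξΦ_I has rank q. -/

import Mathlib

open MeasureTheory Metric Set ENNReal

noncomputable section

/-- The open unit polydisc in `ℂⁿ`. -/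
def polydisc (n : ℕ) : Set (Fin n → ℂ) := {z | ∀ j, ‖z j‖ < 1}

/-- The closed unit polydisc in `ℂⁿ`. -/
def closedPolydisc (n : ℕ) : Set (Fin n → ℂ) := {z | ∀ j, ‖z j‖ ≤ 1}

/-- The distinguished boundary (torus) of the polydisc. -/
def torus (n : ℕ) : Set (Fin n → ℂ) := {z | ∀ j, ‖z j‖ = 1}

/-- The `(i,j)` entry `∂Φ_i/∂z_j(ζ)` of the complex Jacobian matrix of `Φ` at `ζ`
(computed via the derivative of the extension to the closed polydisc). -/
def jacEntry (n : ℕ) (Φ : (Fin n → ℂ) → (Fin n → ℂ)) (ζ : Fin n → ℂ) (i j : Fin n) : ℂ :=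
  fderivWithin ℝ Φ (closedPolydisc n) ζ (Pi.single j 1) i

/-- The rank condition (†): for every nonempty `I ⊆ {1,…,n}` of cardinality `q` and
every `ζ ∈ 𝕋ⁿ` with `Φ_I(ζ) ∈ 𝕋^q`, the Jacobian `d_ζΦ_I` has rank `q`. -/
def rankCond (n : ℕ) (Φ : (Fin n → ℂ) → (Fin n → ℂ)) : Prop :=
  ∀ I : Finset (Fin n), I.Nonempty → ∀ ζ ∈ torus n, (∀ i ∈ I, ‖Φ ζ i‖ = 1) →
    Matrix.rank (Matrix.of fun (i : I) (j : Fin n) => jacEntry n Φ ζ i j) = I.card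

/-!
Let `ξ` lie in the closed polydisc. Pushing each coordinate `ξ_k` radially onto the unit circle
gives a point `ζ` of the torus, and the affine disc `w ↦ ξ + w (ζ - ξ)`, `|w| ≤ 1`, stays in the
closed polydisc. If `f = Φ_i` satisfies `|f(ξ)| = 1`, then `f` is constant on this disc by the
maximum modulus principle, and in fact so is each `∂_j f`:
* if `|ξ_j| < 1`, the maximum modulus principle in the `j`-th coordinate gives `∂_j f = 0` at
  every point of the open disc;
* if `|ξ_j| = 1`, the disc does not move the `j`-th coordinate. Rotating that coordinate cannot
  increase `|f|`, hence `conj (f ξ) * ξ_j * ∂_j f` is real along the disc. It is holomorphic there,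
  as a uniform limit of difference quotients, so it is constant.

Thus the rows of the Jacobian of `Φ_I` at `ξ` agree with those at `ζ`, where (†) applies.
-/

open Filter Function ComplexConjugate
open scoped Topology InnerProductSpace

section UniformDifferenceQuotients

variable {𝕜 E F : Type*} [RCLike 𝕜]
  [NormedAddCommGroup E] [NormedSpace ℝ E] [NormedSpace 𝕜 E]
  [NormedAddCommGroup F] [NormedSpace 𝕜 F]
  {f : E → F} {f' : E → E →L[𝕜] F} {K : Set E}

theorem exists_pos_forall_norm_sub_sub_le (hK : IsCompact K) (hconv : Convex ℝ K)
    (hf : ∀ x ∈ K, HasFDerivWithinAt f (f' x) K x) (hf' : ContinuousOn f' K)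
    {ε : ℝ} (hε : 0 < ε) :
    ∃ δ > 0, ∀ x ∈ K, ∀ y ∈ K, ‖y - x‖ ≤ δ → ‖f y - f x - f' x (y - x)‖ ≤ ε * ‖y - x‖ := by
  obtain ⟨δ, hδ, hclose⟩ :=
    Metric.uniformContinuousOn_iff_le.1 (hK.uniformContinuousOn_of_continuous hf') ε hε
  refine ⟨δ, hδ, fun x hx y hy hxy ↦ ?_⟩
  refine Convex.norm_image_sub_le_of_norm_hasFDerivWithin_le' (s := K ∩ closedBall x δ)
    (fun z hz ↦ (hf z hz.1).mono inter_subset_left) (fun z hz ↦ ?_)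
    (hconv.inter (convex_closedBall x δ)) ⟨hx, mem_closedBall_self hδ.le⟩
    ⟨hy, mem_closedBall_iff_norm.2 hxy⟩
  rw [← dist_eq_norm]
  exact hclose z hz.1 x hx hz.2

theorem tendstoUniformlyOn_inv_smul_sub [NormedSpace ℝ F] (hK : IsCompact K)
    (hconv : Convex ℝ K) (hf : ∀ x ∈ K, HasFDerivWithinAt f (f' x) K x)
    (hf' : ContinuousOn f' K) (v : E) :
    TendstoUniformlyOn (fun (t : ℝ) x ↦ t⁻¹ • (f (x + t • v) - f x)) (fun x ↦ f' x v)
      (𝓝[>] 0) {x | x ∈ K ∧ x + v ∈ K} := by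
  rw [Metric.tendstoUniformlyOn_iff]
  intro ε hε
  obtain ⟨δ, hδ, htaylor⟩ := exists_pos_forall_norm_sub_sub_le hK hconv hf hf'
    (show 0 < ε / (‖v‖ + 1) by positivity)
  filter_upwards [Ioo_mem_nhdsGT (show 0 < min 1 (δ / (‖v‖ + 1)) by positivity)]
    with t ht x hx
  obtain ⟨ht1, htδ⟩ := lt_min_iff.1 ht.2
  have hstep : x + t • v - x = t • v := add_sub_cancel_left _ _
  have hnorm : ‖t • v‖ = t * ‖v‖ := by rw [norm_smul, Real.norm_of_nonneg ht.1.le]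
  have hsmall : ‖t • v‖ ≤ δ := by
    rw [lt_div_iff₀ (by positivity)] at htδ
    nlinarith [ht.1]
  have hbound := htaylor x hx.1 (x + t • v)
    (hconv.add_smul_mem hx.1 hx.2 ⟨ht.1.le, ht1.le⟩) (by rwa [hstep])
  have hquot : t⁻¹ • (f (x + t • v) - f x) - f' x v
      = t⁻¹ • (f (x + t • v) - f x - f' x (t • v)) := by
    rw [ContinuousLinearMap.map_smul_of_tower, smul_sub _ _ (t • _), inv_smul_smul₀ ht.1.ne']
  rw [hstep, hnorm] at hbound
  rw [dist_comm, dist_eq_norm, hquot, norm_smul, norm_inv, Real.norm_of_nonneg ht.1.le]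
  calc t⁻¹ * ‖f (x + t • v) - f x - f' x (t • v)‖
      ≤ t⁻¹ * (ε / (‖v‖ + 1) * (t * ‖v‖)) := by gcongr; exact inv_nonneg.2 ht.1.le
    _ = ε * (‖v‖ / (‖v‖ + 1)) := by field_simp [ht.1.ne']
    _ < ε := mul_lt_of_lt_one_right hε ((div_lt_one (by positivity)).2 (lt_add_one _))

end UniformDifferenceQuotients

section BoundaryRegularity

variable {E F : Type*} [NormedAddCommGroup E] [NormedSpace ℂ E]
  [NormedAddCommGroup F] [NormedSpace ℂ F] [CompleteSpace F] {f : E → F}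

-- The complex-linear maps form a closed subspace of the real-linear ones.
theorem contDiffOn_one_closure_of_differentiableOn {U : Set E} (hU : IsOpen U)
    (huniq : UniqueDiffOn ℝ (closure U)) (hhol : DifferentiableOn ℂ f U)
    (hsm : ContDiffOn ℝ 1 f (closure U)) : ContDiffOn ℂ 1 f (closure U) := by
  let ρ := ContinuousLinearMap.restrictScalarsIsometry ℂ E F ℝ ℝ
  have hcont := hsm.continuousOn_fderivWithin huniq le_rfl
  have hlin : MapsTo (fderivWithin ℝ f (closure U)) (closure U) (range ρ) := by
    have hinner : MapsTo (fderivWithin ℝ f (closure U)) U (range ρ) := fun z hz ↦ by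
      have hz' := hU.mem_nhds hz
      rw [fderivWithin_of_mem_nhds (mem_of_superset hz' subset_closure),
        (hhol.differentiableAt hz').fderiv_restrictScalars ℝ]
      exact mem_range_self _
    simpa only [ρ.isometry.isClosedEmbedding.isClosed_range.closure_eq]
      using hinner.closure_of_continuousOn hcont
  have hdiff : DifferentiableOn ℂ f (closure U) := fun z hz ↦
    (differentiableWithinAt_iff_restrictScalars ℝ (hsm.differentiableOn one_ne_zero z hz)
      (huniq z hz)).2 (hlin hz)
  rw [← zero_add 1, contDiffOn_succ_iff_fderivWithin huniq.mono_field, contDiffOn_zero]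
  refine ⟨hdiff, by simp, ?_⟩
  rw [ρ.isometry.isEmbedding.isInducing.continuousOn_iff]
  exact hcont.congr fun z hz ↦ (hdiff z hz).restrictScalars_fderivWithin ℝ (huniq z hz)

theorem differentiableOn_fderivWithin_comp_apply {f' : E → E →L[ℂ] F} {K : Set E}
    (hK : IsCompact K) (hconv : Convex ℝ K) (hf : ∀ x ∈ K, HasFDerivWithinAt f (f' x) K x)
    (hf' : ContinuousOn f' K) {U : Set ℂ} (hU : IsOpen U) {φ : ℂ → E}
    (hφ : DifferentiableOn ℂ φ U) (hmaps : MapsTo φ U K) {v : E}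
    (hv : MapsTo (fun w ↦ φ w + v) U K) :
    DifferentiableOn ℂ (fun w ↦ f' (φ w) v) U := by
  have hlim := ((tendstoUniformlyOn_inv_smul_sub hK hconv hf hf' v).comp φ).mono
    (s' := U) fun w hw ↦ ⟨hmaps hw, hv hw⟩
  have hfdiff : DifferentiableOn ℂ f K := fun x hx ↦ (hf x hx).differentiableWithinAt
  refine hlim.tendstoLocallyUniformlyOn.differentiableOn ?_ hU
  filter_upwards [Ioo_mem_nhdsGT one_pos] with t ht
  have hshift : MapsTo (fun w ↦ φ w + t • v) U K := fun w hw ↦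
    hconv.add_smul_mem (hmaps hw) (hv hw) ⟨ht.1.le, ht.2.le⟩
  exact ((hfdiff.comp (hφ.add_const _) hshift).sub (hfdiff.comp hφ hmaps)).const_smul t⁻¹

end BoundaryRegularity

section MaximumModulus

variable {E F : Type*} [NormedAddCommGroup E] [NormedSpace ℂ E] {K : Set E}

theorem eqOn_const_of_norm_eq_one [NormedAddCommGroup F] [NormedSpace ℂ F]
    [StrictConvexSpace ℝ F] {f : E → F} (hf : DifferentiableOn ℂ f K)
    (hfK : MapsTo f K (closedBall 0 1)) {φ : ℂ → E} (hφ : Differentiable ℂ φ)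
    (hmaps : MapsTo φ (closedBall 0 1) K) (h1 : ‖f (φ 0)‖ = 1) :
    EqOn (f ∘ φ) (const ℂ (f (φ 0))) (closedBall 0 1) := by
  have hd : DifferentiableOn ℂ (f ∘ φ) (closedBall 0 1) := hf.comp hφ.differentiableOn hmaps
  refine Complex.eqOn_closedBall_of_isMaxOn_norm
    (hd.mono closure_ball_subset_closedBall).diffContOnCl fun w hw ↦ ?_
  simpa only [mem_ofPred_eq, comp_apply, h1, mem_closedBall_zero_iff]
    using hfK (hmaps (ball_subset_closedBall hw))

theorem fderivWithin_apply_eq_zero_of_norm_eq_one [NormedAddCommGroup F] [NormedSpace ℂ F]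
    [StrictConvexSpace ℝ F] {f : E → F}
    (hf : DifferentiableOn ℂ f K) (hfK : MapsTo f K (closedBall 0 1)) {a v : E}
    (hav : MapsTo (fun w : ℂ ↦ a + w • v) (closedBall 0 1) K) (h1 : ‖f a‖ = 1) :
    fderivWithin ℂ f K a v = 0 := by
  have ha : a ∈ K := by simpa using hav (mem_closedBall_self zero_le_one)
  have hline : HasDerivAt (fun w : ℂ ↦ a + w • v) v 0 := by
    simpa using ((hasDerivAt_id (0 : ℂ)).smul_const v).const_add a
  have hnhds : closedBall (0 : ℂ) 1 ∈ 𝓝 0 := closedBall_mem_nhds 0 one_pos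
  have hderiv : HasDerivAt (f ∘ fun w : ℂ ↦ a + w • v) (fderivWithin ℂ f K a v) 0 :=
    (hf a ha).hasFDerivWithinAt.comp_hasDerivAt_of_eq 0 hline
      (eventually_of_mem hnhds fun w hw ↦ hav hw) (by simp)
  have hconst := eqOn_const_of_norm_eq_one hf hfK (φ := fun w ↦ a + w • v) (by fun_prop) hav
    (by simpa using h1)
  exact hderiv.unique
    ((hasDerivAt_const (0 : ℂ) _).congr_of_eventuallyEq (hconst.eventuallyEq_of_mem hnhds))

theorem inner_eq_zero_of_isLocalMax_norm [NormedAddCommGroup F] [InnerProductSpace ℝ F]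
    {γ : ℝ → F} {γ' : F} {t : ℝ} (hγ : HasDerivAt γ γ' t) (hmax : IsLocalMax (‖γ ·‖) t) :
    ⟪γ t, γ'⟫_ℝ = 0 := by
  have hsq : IsLocalMax (‖γ ·‖ ^ 2) t :=
    hmax.mono fun s hs ↦ pow_le_pow_left₀ (norm_nonneg _) hs 2
  simpa using hsq.hasDerivAt_eq_zero hγ.norm_sq

-- `t ↦ c + e^{it} v` runs in `K`, so `‖f‖` restricted to it is maximal at `t = 0`.
theorem im_conj_mul_fderivWithin_apply_eq_zero {f : E → ℂ} (hf : DifferentiableOn ℂ f K)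
    (hfK : MapsTo f K (closedBall 0 1)) {c v : E}
    (hcv : MapsTo (fun w : ℂ ↦ c + w • v) (closedBall 0 1) K) (h1 : ‖f (c + v)‖ = 1) :
    (conj (f (c + v)) * fderivWithin ℂ f K (c + v) v).im = 0 := by
  let γ : ℝ → E := fun t ↦ c + Complex.exp (t * Complex.I) • v
  have hγ0 : γ 0 = c + v := by simp [γ]
  have hγK (t : ℝ) : γ t ∈ K :=
    hcv (mem_closedBall_zero_iff.2 (Complex.norm_exp_ofReal_mul_I t).le)
  have hγ : HasDerivAt γ (Complex.I • v) 0 := by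
    have hexp : HasDerivAt (fun t : ℝ ↦ Complex.exp (t * Complex.I)) Complex.I 0 := by
      simpa using ((Complex.ofRealCLM.hasDerivAt (x := 0)).mul_const Complex.I).cexp
    exact (hexp.smul_const v).const_add c
  have hfγ : HasDerivAt (f ∘ γ) (Complex.I * fderivWithin ℂ f K (c + v) v) 0 := by
    have hfc := (hf _ (hγK 0)).hasFDerivWithinAt.restrictScalars ℝ
    simpa [hγ0] using hfc.comp_hasDerivAt 0 hγ (Eventually.of_forall hγK)
  have hmax : IsLocalMax (fun t ↦ ‖(f ∘ γ) t‖) 0 := Eventually.of_forall fun t ↦ by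
    simpa only [comp_apply, hγ0, h1, mem_closedBall_zero_iff] using hfK (hγK t)
  have horth := inner_eq_zero_of_isLocalMax_norm hfγ hmax
  rw [comp_apply, hγ0, Complex.inner, mul_assoc, Complex.I_mul_re, neg_eq_zero, mul_comm] at horth
  exact horth

-- The derivative is holomorphic in `w` and, up to the fixed factor `conj (f (c + v))`, real.
theorem eqOn_fderivWithin_apply_of_norm_eq_one {f : E → ℂ} (hK : IsCompact K) (hconv : Convex ℝ K)
    (huniq : UniqueDiffOn ℂ K) (hf : ContDiffOn ℂ 1 f K) (hfK : MapsTo f K (closedBall 0 1))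
    {b c v : E} (hbcv : ∀ w ∈ closedBall (0 : ℂ) 1, ∀ z ∈ closedBall (0 : ℂ) 1,
      c + w • b + z • v ∈ K) (h1 : ‖f (c + v)‖ = 1) :
    EqOn (fun w : ℂ ↦ fderivWithin ℂ f K (c + w • b + v) v)
      (const ℂ (fderivWithin ℂ f K (c + v) v)) (ball 0 1) := by
  have hdiff : DifferentiableOn ℂ f K := hf.differentiableOn one_ne_zero
  have hface : MapsTo (fun w : ℂ ↦ c + w • b + v) (closedBall 0 1) K := fun w hw ↦ by
    simpa only [one_smul] using hbcv w hw 1 (by simp)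
  have hconst (w : ℂ) (hw : w ∈ closedBall 0 1) : f (c + w • b + v) = f (c + v) := by
    simpa using eqOn_const_of_norm_eq_one hdiff hfK (φ := fun w ↦ c + w • b + v) (by fun_prop)
      hface (by simpa using h1) hw
  let g : ℂ → ℂ := fun w ↦ conj (f (c + v)) * fderivWithin ℂ f K (c + w • b + v) v
  have hg : DifferentiableOn ℂ g (ball 0 1) := by
    have hneg := differentiableOn_fderivWithin_comp_apply hK hconv
      (fun x hx ↦ (hdiff x hx).hasFDerivWithinAt) (hf.continuousOn_fderivWithin huniq le_rfl)
      isOpen_ball (by fun_prop) (hface.mono_left ball_subset_closedBall) (v := -v) fun w hw ↦ by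
        simpa using hbcv w (ball_subset_closedBall hw) 0 (by simp)
    simpa only [map_neg, Pi.neg_apply, neg_neg] using hneg.neg.const_mul (conj (f (c + v)))
  have hreal (w : ℂ) (hw : w ∈ ball 0 1) : (g w).im = 0 := by
    have hw' := ball_subset_closedBall hw
    have hwconst := hconst w hw'
    simpa only [hwconst] using
      im_conj_mul_fderivWithin_apply_eq_zero hdiff hfK (hbcv w hw') (by rw [hwconst, h1])
  obtain ⟨d, hd⟩ := (hg.analyticOnNhd isOpen_ball).eq_const_of_im_eq_const hreal isOpen_ball
    ((convex_ball 0 1).isConnected (nonempty_ball.2 one_pos))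
  have hne : conj (f (c + v)) ≠ 0 := by
    rw [← norm_ne_zero_iff, RCLike.norm_conj, h1]
    exact one_ne_zero
  intro w hw
  have hw0 : g w = g 0 := (hd w hw).trans (hd 0 (mem_ball_self one_pos)).symm
  simpa [g, hne] using hw0

end MaximumModulus

theorem uniqueDiffOn_closedBall (𝕜 : Type*) [RCLike 𝕜] {E : Type*} [NormedAddCommGroup E]
    [NormedSpace ℝ E] [NormedSpace 𝕜 E] {x : E} {r : ℝ} (hr : 0 < r) :
    UniqueDiffOn 𝕜 (closedBall x r) :=
  uniqueDiffOn_convex_of_isRCLikeNormedField (convex_closedBall x r)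
    ⟨x, ball_subset_interior_closedBall (mem_ball_self hr)⟩

section ClosedBall

variable {ι : Type*} [Fintype ι]

theorem add_smul_mem_closedBall {a b : ι → ℂ} (hab : ∀ k, ‖a k‖ + ‖b k‖ ≤ 1) {w : ℂ}
    (hw : w ∈ closedBall 0 1) : a + w • b ∈ closedBall 0 1 := by
  rw [mem_closedBall_zero_iff] at hw ⊢
  refine (pi_norm_le_iff_of_nonneg zero_le_one).2 fun k ↦ ?_
  calc ‖a k + w * b k‖ ≤ ‖a k‖ + ‖w‖ * ‖b k‖ := by
        simpa only [norm_mul] using norm_add_le (a k) (w * b k)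
    _ ≤ ‖a k‖ + ‖b k‖ := by gcongr; exact mul_le_of_le_one_left (norm_nonneg _) hw
    _ ≤ 1 := hab k

variable [DecidableEq ι] {f : (ι → ℂ) → ℂ} {a b : ι → ℂ}

theorem fderivWithin_single_eq_zero (hf : DifferentiableOn ℂ f (closedBall 0 1))
    (hfK : MapsTo f (closedBall 0 1) (closedBall 0 1)) (ha : a ∈ closedBall 0 1)
    (h1 : ‖f a‖ = 1) {j : ι} (hj : ‖a j‖ < 1) :
    fderivWithin ℂ f (closedBall 0 1) a (Pi.single j 1) = 0 := by
  have hr : 0 < 1 - ‖a j‖ := sub_pos.2 hj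
  have hdisc : ∀ k, ‖a k‖ + ‖(Pi.single j ((1 - ‖a j‖ : ℝ) : ℂ) : ι → ℂ) k‖ ≤ 1 := by
    intro k
    obtain rfl | hk := eq_or_ne k j
    · rw [Pi.single_eq_same, Complex.norm_of_nonneg hr.le, add_sub_cancel]
    · rw [Pi.single_eq_of_ne hk, norm_zero, add_zero]
      exact (norm_le_pi_norm a k).trans (mem_closedBall_zero_iff.1 ha)
  have hzero := fderivWithin_apply_eq_zero_of_norm_eq_one hf hfK
    (fun w hw ↦ add_smul_mem_closedBall hdisc hw) h1
  rw [← mul_one ((1 - ‖a j‖ : ℝ) : ℂ), ← smul_eq_mul, Pi.single_smul, map_smul] at hzero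
  exact (smul_eq_zero.1 hzero).resolve_left (Complex.ofReal_ne_zero.2 hr.ne')

theorem eqOn_fderivWithin_single_of_norm_apply_lt_one
    (hf : DifferentiableOn ℂ f (closedBall 0 1)) (hfK : MapsTo f (closedBall 0 1) (closedBall 0 1))
    (hab : ∀ k, ‖a k‖ + ‖b k‖ ≤ 1) (h1 : ‖f a‖ = 1) {j : ι} (hj : ‖a j‖ < 1) :
    EqOn (fun w : ℂ ↦ fderivWithin ℂ f (closedBall 0 1) (a + w • b) (Pi.single j 1))
      (const ℂ 0) (ball 0 1) := by
  intro w hw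
  have hw' := ball_subset_closedBall hw
  have hconst : f (a + w • b) = f a := by
    simpa using eqOn_const_of_norm_eq_one hf hfK (φ := fun w ↦ a + w • b) (by fun_prop)
      (fun z hz ↦ add_smul_mem_closedBall hab hz) (by simpa using h1) hw'
  refine fderivWithin_single_eq_zero hf hfK (add_smul_mem_closedBall hab hw')
    (by rw [hconst, h1]) ?_
  rw [mem_ball_zero_iff] at hw
  calc ‖a j + w * b j‖ ≤ ‖a j‖ + ‖w‖ * ‖b j‖ := by
        simpa only [norm_mul] using norm_add_le (a j) (w * b j)
    _ ≤ ‖a j‖ + ‖w‖ * (1 - ‖a j‖) := by gcongr; linarith [hab j]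
    _ < ‖a j‖ + (1 - ‖a j‖) := by
        gcongr
        exact mul_lt_of_lt_one_left (sub_pos.2 hj) hw
    _ = 1 := add_sub_cancel _ _

theorem eqOn_fderivWithin_single_of_norm_apply_eq_one (hf : ContDiffOn ℂ 1 f (closedBall 0 1))
    (hfK : MapsTo f (closedBall 0 1) (closedBall 0 1)) (hab : ∀ k, ‖a k‖ + ‖b k‖ ≤ 1)
    (h1 : ‖f a‖ = 1) {j : ι} (hj : ‖a j‖ = 1) :
    EqOn (fun w : ℂ ↦ fderivWithin ℂ f (closedBall 0 1) (a + w • b) (Pi.single j 1))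
      (const ℂ (fderivWithin ℂ f (closedBall 0 1) a (Pi.single j 1))) (ball 0 1) := by
  have hbj : b j = 0 := norm_le_zero_iff.1 (by linarith [hab j])
  have hmem (w : ℂ) (hw : w ∈ closedBall 0 1) (z : ℂ) (hz : z ∈ closedBall 0 1) :
      a - Pi.single j (a j) + w • b + z • Pi.single j (a j) ∈ closedBall 0 1 := by
    have hsum : a - Pi.single j (a j) + w • b + z • Pi.single j (a j)
        = update a j (z * a j) + w • b := by
      ext k
      obtain rfl | hk := eq_or_ne k j <;> simp [*]
    rw [hsum]
    refine add_smul_mem_closedBall (fun k ↦ ?_) hw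
    obtain rfl | hk := eq_or_ne k j
    · simpa [hbj, hj] using hz
    · simpa [hk] using hab k
  have hadd (w : ℂ) : a - Pi.single j (a j) + w • b + Pi.single j (a j) = a + w • b := by abel
  have hsingle : (Pi.single j (a j) : ι → ℂ) = a j • Pi.single j 1 := by
    rw [← Pi.single_smul, smul_eq_mul, mul_one]
  have haj : a j ≠ 0 := norm_ne_zero_iff.1 (hj.trans_ne one_ne_zero)
  intro w hw
  have hscaled := eqOn_fderivWithin_apply_of_norm_eq_one (isCompact_closedBall 0 1)
    (convex_closedBall 0 1) (uniqueDiffOn_closedBall ℂ one_pos) hf hfK hmem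
    (by rwa [sub_add_cancel]) hw
  simp only [const_apply, hadd, sub_add_cancel] at hscaled
  rw [hsingle, map_smul, map_smul] at hscaled
  exact smul_right_injective ℂ haj hscaled

theorem eqOn_fderivWithin_single_of_norm_eq_one (hf : ContDiffOn ℂ 1 f (closedBall 0 1))
    (hfK : MapsTo f (closedBall 0 1) (closedBall 0 1)) (hab : ∀ k, ‖a k‖ + ‖b k‖ ≤ 1)
    (h1 : ‖f a‖ = 1) (j : ι) :
    EqOn (fun w : ℂ ↦ fderivWithin ℂ f (closedBall 0 1) (a + w • b) (Pi.single j 1))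
      (const ℂ (fderivWithin ℂ f (closedBall 0 1) a (Pi.single j 1))) (closedBall 0 1) := by
  have hdiff := hf.differentiableOn one_ne_zero
  have hopen : EqOn (fun w : ℂ ↦ fderivWithin ℂ f (closedBall 0 1) (a + w • b) (Pi.single j 1))
      (const ℂ (fderivWithin ℂ f (closedBall 0 1) a (Pi.single j 1))) (ball 0 1) := by
    obtain hj | hj := (le_of_add_le_of_nonneg_left (hab j) (norm_nonneg _)).lt_or_eq
    · have ha : a ∈ closedBall 0 1 := by
        simpa using add_smul_mem_closedBall hab (mem_closedBall_self zero_le_one)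
      rw [fderivWithin_single_eq_zero hdiff hfK ha h1 hj]
      exact eqOn_fderivWithin_single_of_norm_apply_lt_one hdiff hfK hab h1 hj
    · exact eqOn_fderivWithin_single_of_norm_apply_eq_one hf hfK hab h1 hj
  have hcont := (hf.continuousOn_fderivWithin (uniqueDiffOn_closedBall ℂ one_pos) le_rfl).clm_apply
    (continuousOn_const (c := Pi.single j 1))
  exact hopen.of_subset_closure
    (hcont.comp (by fun_prop) fun w hw ↦ add_smul_mem_closedBall hab hw) continuousOn_const
    ball_subset_closedBall (closure_ball 0 one_ne_zero).ge

end ClosedBall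

theorem exists_norm_eq_one_norm_add_norm_sub_eq_one {z : ℂ} (hz : ‖z‖ ≤ 1) :
    ∃ u : ℂ, ‖u‖ = 1 ∧ ‖z‖ + ‖u - z‖ = 1 := by
  let u := Complex.exp (z.arg * Complex.I)
  have hu : ‖u‖ = 1 := Complex.norm_exp_ofReal_mul_I _
  have hsub : u - z = (1 - ‖z‖ : ℝ) * u := by
    conv_lhs => rw [← Complex.norm_mul_exp_arg_mul_I z]
    push_cast
    ring
  refine ⟨u, hu, ?_⟩
  rw [hsub, norm_mul, hu, mul_one, Complex.norm_of_nonneg (sub_nonneg.2 hz), add_sub_cancel]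

theorem exists_norm_eq_one_forall_fderivWithin_single_eq {ι : Type*} [Fintype ι] [DecidableEq ι]
    {ξ : ι → ℂ} (hξ : ∀ k, ‖ξ k‖ ≤ 1) :
    ∃ ζ : ι → ℂ, (∀ k, ‖ζ k‖ = 1) ∧ ∀ f : (ι → ℂ) → ℂ, ContDiffOn ℂ 1 f (closedBall 0 1) →
      MapsTo f (closedBall 0 1) (closedBall 0 1) → ‖f ξ‖ = 1 →
        f ζ = f ξ ∧ ∀ j, fderivWithin ℂ f (closedBall 0 1) ζ (Pi.single j 1) =
          fderivWithin ℂ f (closedBall 0 1) ξ (Pi.single j 1) := by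
  choose ζ hζ hsum using fun k ↦ exists_norm_eq_one_norm_add_norm_sub_eq_one (hξ k)
  have hdisc (k : ι) : ‖ξ k‖ + ‖(ζ - ξ) k‖ ≤ 1 := (hsum k).le
  refine ⟨ζ, hζ, fun f hf hfK h1 ↦ ⟨?_, fun j ↦ ?_⟩⟩
  · simpa using eqOn_const_of_norm_eq_one (hf.differentiableOn one_ne_zero) hfK
      (φ := fun w ↦ ξ + w • (ζ - ξ)) (by fun_prop) (fun w hw ↦ add_smul_mem_closedBall hdisc hw)
      (by simpa using h1) (x := 1) (by simp)
  · simpa using eqOn_fderivWithin_single_of_norm_eq_one hf hfK hdisc h1 j (x := 1) (by simp)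

section Polydisc

variable {n : ℕ} {Φ : (Fin n → ℂ) → (Fin n → ℂ)}

theorem polydisc_eq_ball : polydisc n = ball 0 1 := by
  ext z
  simp [polydisc, pi_norm_lt_iff]

theorem closedPolydisc_eq_closedBall : closedPolydisc n = closedBall 0 1 := by
  ext z
  simp [closedPolydisc, pi_norm_le_iff_of_nonneg]

theorem closedPolydisc_eq_closure : closedPolydisc n = closure (polydisc n) := by
  rw [polydisc_eq_ball, closedPolydisc_eq_closedBall, closure_ball _ one_ne_zero]

theorem contDiffOn_closedPolydisc (hhol : DifferentiableOn ℂ Φ (polydisc n))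
    (hsm : ContDiffOn ℝ 1 Φ (closedPolydisc n)) : ContDiffOn ℂ 1 Φ (closedBall 0 1) := by
  rw [polydisc_eq_ball] at hhol
  rw [closedPolydisc_eq_closedBall, ← closure_ball _ one_ne_zero] at hsm
  rw [← closure_ball _ one_ne_zero]
  refine contDiffOn_one_closure_of_differentiableOn isOpen_ball ?_ hhol hsm
  rw [closure_ball _ one_ne_zero]
  exact uniqueDiffOn_closedBall ℝ one_pos

theorem mapsTo_closedPolydisc (hc : ContinuousOn Φ (closedPolydisc n))
    (hmap : ∀ z ∈ polydisc n, Φ z ∈ polydisc n) :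
    MapsTo Φ (closedPolydisc n) (closedPolydisc n) := by
  rw [closedPolydisc_eq_closure] at hc ⊢
  exact MapsTo.closure_of_continuousOn hmap hc

theorem jacEntry_eq_fderivWithin (hΦ : DifferentiableOn ℂ Φ (closedBall 0 1)) {z : Fin n → ℂ}
    (hz : z ∈ closedBall 0 1) (i j : Fin n) :
    jacEntry n Φ z i j = fderivWithin ℂ (fun z ↦ Φ z i) (closedBall 0 1) z (Pi.single j 1) := by
  have huniq : UniqueDiffWithinAt ℝ (closedBall (0 : Fin n → ℂ) 1) z :=
    uniqueDiffOn_closedBall ℝ one_pos z hz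
  rw [fderivWithin_apply (hΦ z hz) huniq.mono_field, jacEntry, closedPolydisc_eq_closedBall,
    ← (hΦ z hz).restrictScalars_fderivWithin ℝ huniq]
  rfl

theorem exists_mem_torus_jacEntry_eq (hhol : DifferentiableOn ℂ Φ (polydisc n))
    (hsm : ContDiffOn ℝ 1 Φ (closedPolydisc n)) (hmap : ∀ z ∈ polydisc n, Φ z ∈ polydisc n)
    {ξ : Fin n → ℂ} (hξ : ξ ∈ closedPolydisc n) :
    ∃ ζ ∈ torus n, ∀ i, ‖Φ ξ i‖ = 1 →
      Φ ζ i = Φ ξ i ∧ ∀ j, jacEntry n Φ ζ i j = jacEntry n Φ ξ i j := by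
  obtain ⟨ζ, hζ, hprop⟩ := exists_norm_eq_one_forall_fderivWithin_single_eq hξ
  have hζ' : ζ ∈ closedPolydisc n := fun k ↦ (hζ k).le
  have hΦ := contDiffOn_closedPolydisc hhol hsm
  have hmaps := mapsTo_closedPolydisc hsm.continuousOn hmap
  rw [closedPolydisc_eq_closedBall] at hξ hζ' hmaps
  refine ⟨ζ, hζ, fun i hi ↦ ?_⟩
  simp only [jacEntry_eq_fderivWithin (hΦ.differentiableOn one_ne_zero), hξ, hζ']
  exact hprop (fun z ↦ Φ z i) (contDiffOn_pi.1 hΦ i) (fun z hz ↦ mem_closedBall_zero_iff.2 <|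
    (norm_le_pi_norm (Φ z) i).trans (mem_closedBall_zero_iff.1 (hmaps hz))) hi

end Polydisc

theorem rank_condition_on_topological_boundary (n : ℕ)
    (Φ : (Fin n → ℂ) → (Fin n → ℂ))
    (hhol : DifferentiableOn ℂ Φ (polydisc n))
    (hsm : ContDiffOn ℝ 1 Φ (closedPolydisc n))
    (hmap : ∀ z ∈ polydisc n, Φ z ∈ polydisc n)
    (hrank : rankCond n Φ) :
    ∀ I : Finset (Fin n), I.Nonempty → ∀ ξ ∈ closedPolydisc n,
      (∀ i ∈ I, ‖Φ ξ i‖ = 1) →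
        Matrix.rank (Matrix.of fun (i : I) (j : Fin n) => jacEntry n Φ ξ i j) = I.card := by
  intro I hI ξ hξ hΦξ
  obtain ⟨ζ, hζ, hjac⟩ := exists_mem_torus_jacEntry_eq hhol hsm hmap hξ
  have hΦζ (i : Fin n) (hi : i ∈ I) : ‖Φ ζ i‖ = 1 := by rw [(hjac i (hΦξ i hi)).1, hΦξ i hi]
  rw [← hrank I hI ζ hζ hΦζ]
  congr 2 with i j
  exact ((hjac i (hΦξ i i.2)).2 j).symm

end
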